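/- For every smooth vector field v: ℝ³ → ℝ³ that is 2π-periodic in each coordinate and has zero mean over [−π,π]³, there exists a smooth 3×3-matrix-valued field R: ℝ³ → ℝ^{3×3}, 2π-periodic in each coordinate, such that R(x) is symmetric and trace-free for every x and div R = v, where the divergence is taken row-wise: (div R)_i = Σ_j ∂_j R_{ij}. -/

import Mathlib

noncomputable section

open MeasureTheory Real

/-- The fundamental domain [−π,π]³ of the torus T³. -/
def dom : Set (Fin 3 → ℝ) := Set.Icc (fun _ => -π) (fun _ => π)

/-- Partial derivative in the i-th coordinate direction. -/
def pd (i : Fin 3) (f : (Fin 3 → ℝ) → ℝ) (x : Fin 3 → ℝ) : ℝ := fderiv ℝ f x (Pi.single i 1)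

/-- A function on ℝ³ is 2π-periodic in each coordinate. -/
def Periodic3 (f : (Fin 3 → ℝ) → ℝ) : Prop :=
  ∀ (x : Fin 3 → ℝ) (i : Fin 3), f (x + (2 * π) • (Pi.single i 1 : Fin 3 → ℝ)) = f x

/-- A parametric interval integral of a `C^n` function is `C^n`. -/
theorem contDiff_param_nat (a b : ℝ) (n : ℕ) : ∀ (G : Type) [NormedAddCommGroup G]
    [NormedSpace ℝ G] (F : (Fin 3 → ℝ) → ℝ → G),
    ContDiff ℝ n (Function.uncurry F) → ContDiff ℝ n (fun x => ∫ t in a..b, F x t) := by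
  induction n with
  | zero =>
    intro G _ _ F hF
    have hc : Continuous (Function.uncurry F) := hF.continuous
    simp only [Nat.cast_zero, contDiff_zero]
    exact intervalIntegral.continuous_parametric_intervalIntegral_of_continuous' hc a b
  | succ n ih =>
    intro G _ _ F hF
    have hc : Continuous (Function.uncurry F) := hF.continuous
    have hd : Differentiable ℝ (Function.uncurry F) := hF.differentiable (by simp)
    let F' : (Fin 3 → ℝ) → ℝ → ((Fin 3 → ℝ) →L[ℝ] G) := fun x t =>
      (fderiv ℝ (Function.uncurry F) (x, t)).comp (ContinuousLinearMap.inl ℝ (Fin 3 → ℝ) ℝ)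
    have hF' : ContDiff ℝ n (Function.uncurry F') := by
      have h1 : ContDiff ℝ n (fderiv ℝ (Function.uncurry F)) :=
        hF.fderiv_right (by norm_cast)
      exact h1.clm_comp contDiff_const
    have hc' : Continuous (Function.uncurry F') := hF'.continuous
    have hder : ∀ x t, HasFDerivAt (fun x => F x t) (F' x t) x := by
      intro x t
      have h1 := (hd (x, t)).hasFDerivAt
      have h2 : HasFDerivAt (fun y : Fin 3 → ℝ => (y, t))
          (ContinuousLinearMap.inl ℝ (Fin 3 → ℝ) ℝ) x := hasFDerivAt_prodMk_left x t
      exact h1.comp x h2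
    have key : ∀ x₀, HasFDerivAt (fun x => ∫ t in a..b, F x t) (∫ t in a..b, F' x₀ t) x₀ := by
      intro x₀
      obtain ⟨C, hC⟩ := ((isCompact_closedBall x₀ 1).prod (isCompact_uIcc (a := a) (b := b))).exists_bound_of_continuousOn hc'.continuousOn
      refine intervalIntegral.hasFDerivAt_integral_of_dominated_of_fderiv_le
        (F := F) (F' := F') (bound := fun _ => C) (Metric.closedBall_mem_nhds x₀ one_pos)
        ?_ ?_ ?_ ?_ ?_ ?_
      · exact Filter.Eventually.of_forall fun x =>
          (hc.comp (by fun_prop : Continuous fun t : ℝ => (x, t))).aestronglyMeasurable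
      · exact (hc.comp (by fun_prop : Continuous fun t : ℝ => (x₀, t))).intervalIntegrable _ _
      · exact (hc'.comp (by fun_prop : Continuous fun t : ℝ => (x₀, t))).aestronglyMeasurable
      · exact Filter.Eventually.of_forall fun t ht x hx =>
          hC (x, t) ⟨hx, Set.uIoc_subset_uIcc ht⟩
      · exact intervalIntegrable_const
      · exact Filter.Eventually.of_forall fun t ht x hx => hder x t
    have := contDiff_succ_iff_hasFDerivAt (𝕜 := ℝ) (n := n) (f := fun x => ∫ t in a..b, F x t)
    push_cast
    rw [this]
    exact ⟨_, ih _ F' hF', key⟩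

theorem contDiff_param (a b : ℝ) (F : (Fin 3 → ℝ) → ℝ → ℝ)
    (hF : ContDiff ℝ (⊤ : ℕ∞) (Function.uncurry F)) :
    ContDiff ℝ (⊤ : ℕ∞) (fun x => ∫ t in a..b, F x t) := by
  rw [contDiff_infty] at *
  intro n
  exact contDiff_param_nat a b n ℝ F (hF n)

theorem contDiff_upd {E : Type} [NormedAddCommGroup E] [NormedSpace ℝ E] (i : Fin 3)
    (p : E → Fin 3 → ℝ) (q : E → ℝ)
    (hp : ContDiff ℝ (⊤ : ℕ∞) p) (hq : ContDiff ℝ (⊤ : ℕ∞) q) :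
    ContDiff ℝ (⊤ : ℕ∞) (fun e => Function.update (p e) i (q e)) := by
  rw [contDiff_pi]
  intro j
  by_cases h : j = i
  · subst h; simpa using hq
  · simp only [Function.update_of_ne h]
    exact contDiff_pi.1 hp j

theorem upd_shift_self (x : Fin 3 → ℝ) (i : Fin 3) (c t : ℝ) :
    Function.update (x + c • (Pi.single i 1 : Fin 3 → ℝ)) i t = Function.update x i t := by
  ext k
  by_cases h : k = i
  · subst h; simp
  · simp [h]

theorem upd_shift_ne (x : Fin 3 → ℝ) (i j : Fin 3) (h : i ≠ j) (c t : ℝ) :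
    Function.update (x + c • (Pi.single j 1 : Fin 3 → ℝ)) i t
      = Function.update x i t + c • (Pi.single j 1 : Fin 3 → ℝ) := by
  ext k
  by_cases hk : k = i
  · subst hk; simp [h]
  · simp [hk]

theorem upd_shift_val (x : Fin 3 → ℝ) (i : Fin 3) (c t : ℝ) :
    Function.update x i (t + c) = Function.update x i t + c • (Pi.single i 1 : Fin 3 → ℝ) := by
  ext k
  by_cases hk : k = i
  · subst hk; simp
  · simp [hk]

/-- Smooth periodic functions. -/
def SP : Submodule ℝ ((Fin 3 → ℝ) → ℝ) where
  carrier := {f | ContDiff ℝ (⊤ : ℕ∞) f ∧ Periodic3 f}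
  add_mem' := by
    rintro f g ⟨hf, pf⟩ ⟨hg, pg⟩
    exact ⟨hf.add hg, fun x i => by simp [pf x i, pg x i]⟩
  zero_mem' := ⟨contDiff_const, fun x i => rfl⟩
  smul_mem' := by
    rintro c f ⟨hf, pf⟩
    exact ⟨hf.const_smul c, fun x i => by simp [pf x i]⟩

theorem SP_diff (f : SP) : Differentiable ℝ f.1 := f.2.1.differentiable (by simp)

theorem pd_mem (i : Fin 3) (f : SP) : pd i f.1 ∈ SP := by
  refine ⟨?_, ?_⟩
  · have : ContDiff ℝ (⊤ : ℕ∞) (fderiv ℝ f.1) := f.2.1.fderiv_right (by simp)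
    exact this.clm_apply contDiff_const
  · intro x j
    have h : (fun y => f.1 (y + (2 * π) • (Pi.single j 1 : Fin 3 → ℝ))) = f.1 :=
      funext fun y => f.2.2 y j
    unfold pd
    rw [← fderiv_comp_add_right, h]

/-- Partial derivative as an operator. -/
def D (i : Fin 3) : SP →ₗ[ℝ] SP where
  toFun f := ⟨pd i f.1, pd_mem i f⟩
  map_add' f g := by
    ext x
    simp only [pd, Submodule.coe_add, Pi.add_apply]
    rw [fderiv_add (SP_diff f x) (SP_diff g x)]
    simp
  map_smul' c f := by
    ext x
    simp only [pd, Submodule.coe_smul, Pi.smul_apply, RingHom.id_apply]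
    rw [fderiv_const_smul (SP_diff f x)]
    simp

theorem D_comm (i j : Fin 3) (f : SP) : D i (D j f) = D j (D i f) := by
  ext x
  have hs : IsSymmSndFDerivAt ℝ f.1 x := by
    apply ContDiffAt.isSymmSndFDerivAt (n := (⊤ : ℕ∞)) f.2.1.contDiffAt
    simp only [minSmoothness_of_isRCLikeNormedField]
    exact WithTop.coe_le_coe.2 (le_top : (2 : ℕ∞) ≤ ⊤)
  have hd : DifferentiableAt ℝ (fderiv ℝ f.1) x := by
    have : ContDiff ℝ (⊤ : ℕ∞) (fderiv ℝ f.1) := f.2.1.fderiv_right (by simp)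
    exact this.differentiable (by simp) x
  have key : ∀ a b : Fin 3, (D a (D b f)).1 x
      = fderiv ℝ (fderiv ℝ f.1) x (Pi.single a 1) (Pi.single b 1) := by
    intro a b
    change fderiv ℝ (fun y => fderiv ℝ f.1 y (Pi.single b 1)) x (Pi.single a 1) = _
    rw [fderiv_clm_apply hd (differentiableAt_const _)]
    simp
  rw [key, key]
  exact hs _ _

theorem mean_mem (i : Fin 3) (f : SP) :
    (fun x => (2 * π)⁻¹ * ∫ t in (-π)..π, f.1 (Function.update x i t)) ∈ SP := by
  refine ⟨contDiff_const.mul (contDiff_param _ _ _ ?_), ?_⟩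
  · exact f.2.1.comp (contDiff_upd i _ _ contDiff_fst contDiff_snd)
  · intro x j
    by_cases h : i = j
    · subst h; simp only [upd_shift_self]
    · simp only [upd_shift_ne x i j h, f.2.2 _ j]

/-- Mean in the `i`-th direction. -/
def A (i : Fin 3) (f : SP) : SP := ⟨_, mean_mem i f⟩

theorem A_apply (i : Fin 3) (f : SP) (x : Fin 3 → ℝ) :
    (A i f).1 x = (2 * π)⁻¹ * ∫ t in (-π)..π, f.1 (Function.update x i t) := rfl

theorem A_upd (i : Fin 3) (f : SP) (x : Fin 3 → ℝ) (t : ℝ) :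
    (A i f).1 (Function.update x i t) = (A i f).1 x := by
  simp [A_apply]

theorem cont_upd (i : Fin 3) (f : SP) (x : Fin 3 → ℝ) :
    Continuous (fun t => f.1 (Function.update x i t)) :=
  f.2.1.continuous.comp (by fun_prop)

theorem A_sub_A (i : Fin 3) (f : SP) : A i (f - A i f) = 0 := by
  ext x
  rw [A_apply]
  simp only [Submodule.coe_sub, Pi.sub_apply, A_upd]
  rw [intervalIntegral.integral_sub ((cont_upd i f x).intervalIntegrable _ _) (by simp)]
  rw [intervalIntegral.integral_const, A_apply]
  have := pi_pos
  simp only [smul_eq_mul, Submodule.coe_zero, Pi.zero_apply]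
  field_simp
  ring

theorem hasDerivAt_upd (i : Fin 3) (f : SP) (x : Fin 3 → ℝ) :
    HasDerivAt (fun t => f.1 (Function.update x i t)) ((D i f).1 x) (x i) := by
  have h1 : HasFDerivAt f.1 (fderiv ℝ f.1 x) (Function.update x i (x i)) := by
    rw [Function.update_eq_self]; exact (SP_diff f x).hasFDerivAt
  exact h1.comp_hasDerivAt (x i) (hasDerivAt_update x i (x i))

theorem D_A (i : Fin 3) (f : SP) : D i (A i f) = 0 := by
  ext x
  have h := hasDerivAt_upd i (A i f) x
  simp only [A_upd] at h
  exact h.unique (hasDerivAt_const _ _)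

theorem scale_int (g : ℝ → ℝ) (c : ℝ) :
    c * ∫ s in (0 : ℝ)..1, g (s * c) = ∫ r in (0 : ℝ)..c, g r := by
  rw [intervalIntegral.mul_integral_comp_mul_right]; simp

theorem prim_mem (i : Fin 3) (f : SP) (hf : A i f = 0) :
    (fun x => x i * ∫ s in (0 : ℝ)..1, f.1 (Function.update x i (s * x i))) ∈ SP := by
  have hxi : ContDiff ℝ (⊤ : ℕ∞) (fun x : Fin 3 → ℝ => x i) := contDiff_apply ℝ ℝ i
  refine ⟨hxi.mul (contDiff_param _ _ _ ?_), ?_⟩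
  · exact f.2.1.comp (contDiff_upd i _ _ contDiff_fst
      (contDiff_snd.mul (hxi.comp contDiff_fst)))
  · intro x j
    have e : ∀ y : Fin 3 → ℝ, (y i * ∫ s in (0 : ℝ)..1, f.1 (Function.update y i (s * y i)))
        = ∫ r in (0 : ℝ)..(y i), f.1 (Function.update y i r) := fun y =>
      scale_int (fun r => f.1 (Function.update y i r)) (y i)
    simp only [e]
    by_cases h : i = j
    · subst h
      simp only [upd_shift_self]
      have hp : Function.Periodic (fun r => f.1 (Function.update x i r)) (2 * π) := by
        intro r
        simp only [upd_shift_val]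
        exact f.2.2 _ i
      have h0 : ∫ t in (-π)..π, f.1 (Function.update x i t) = 0 := by
        have := congrArg (fun g : SP => g.1 x) hf
        simp only [A_apply] at this
        have hpi := pi_pos
        simpa [pi_ne_zero] using this
      have h1 := hp.intervalIntegral_add_eq (x i) (-π)
      rw [show -π + 2 * π = π by ring, h0] at h1
      have hc := cont_upd i f x
      have h2 := intervalIntegral.integral_add_adjacent_intervals
        (hc.intervalIntegrable (μ := volume) 0 (x i)) (hc.intervalIntegrable (x i) (x i + 2 * π))
      rw [h1, add_zero] at h2
      simp [← h2]
    · simp only [upd_shift_ne x i j h, f.2.2 _ j]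
      simp [h]

theorem exists_prim (i : Fin 3) (f : SP) (hf : A i f = 0) :
    ∃ g : SP, A i g = 0 ∧ D i g = f := by
  let F : SP := ⟨_, prim_mem i f hf⟩
  refine ⟨F - A i F, A_sub_A i F, ?_⟩
  rw [map_sub, D_A, sub_zero]
  ext x
  have h := hasDerivAt_upd i F x
  have e : (fun t => F.1 (Function.update x i t))
      = fun t => ∫ r in (0 : ℝ)..t, f.1 (Function.update x i r) := by
    funext t
    have := scale_int (fun r => f.1 (Function.update x i r)) t
    simp only [F, Function.update_self, Function.update_idem]
    exact this
  rw [e] at h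
  have hc := cont_upd i f x
  have h2 := intervalIntegral.integral_hasDerivAt_right
    (hc.intervalIntegrable (μ := volume) 0 (x i))
    hc.stronglyMeasurable.stronglyMeasurableAtFilter hc.continuousAt
  have := h.unique h2
  simpa using this

theorem exists_prim5 (i : Fin 3) (f : SP) (hf : A i f = 0) :
    ∃ g : SP, D i (D i (D i (D i (D i g)))) = f := by
  obtain ⟨g1, h1, e1⟩ := exists_prim i f hf
  obtain ⟨g2, h2, e2⟩ := exists_prim i g1 h1
  obtain ⟨g3, h3, e3⟩ := exists_prim i g2 h2
  obtain ⟨g4, h4, e4⟩ := exists_prim i g3 h3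
  obtain ⟨g5, h5, e5⟩ := exists_prim i g4 h4
  exact ⟨g5, by rw [e5, e4, e3, e2, e1]⟩

/-- The algebraic identity behind the construction. -/
theorem alg {V : Type} [AddCommGroup V] [Module ℝ V] (d : Fin 3 → V →ₗ[ℝ] V)
    (hd : ∀ i j f, d i (d j f) = d j (d i f)) (u : Fin 3 → V) :
    ∃ N : Fin 3 → Fin 3 → V, (∀ i j, N i j = N j i) ∧ (∑ i, N i i = 0) ∧
      ∀ i, ∑ j, d j (N i j) = d 0 (d 0 (d 0 (d 0 (d 0 (u i))))) := by
  have h10 := hd 1 0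
  have h20 := hd 2 0
  have h21 := hd 2 1
  let q : V := d 0 (u 0) - d 1 (u 1) - d 2 (u 2)
  let R00 : V := d 0 (d 0 (d 0 q)) - d 0 (d 2 (d 2 q))
  let R11 : V := d 0 (d 2 (d 2 q))
  let R22 : V := - d 0 (d 0 (d 0 q))
  let R12 : V := - (1 / 2 : ℝ) • d 0 (d 1 (d 2 q))
  let R01 : V := d 0 (d 0 (d 0 (d 0 (u 1)))) - (1 / 2 : ℝ) • d 1 (d 2 (d 2 q))
  let R02 : V := d 0 (d 0 (d 0 (d 0 (u 2)))) + (1 / 2 : ℝ) • d 1 (d 1 (d 2 q))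
    + d 0 (d 0 (d 2 q))
  refine ⟨![![R00, R01, R02], ![R01, R11, R12], ![R02, R12, R22]], ?_, ?_, ?_⟩
  · intro i j
    fin_cases i <;> fin_cases j <;> rfl
  · simp [Fin.sum_univ_three, R00, R11, R22]
  · intro i
    fin_cases i <;>
    · simp [Fin.sum_univ_three, R00, R11, R22, R12, R01, R02, q, h10, h20, h21]
      try module

/-- The system is solvable for data with zero mean in one direction. -/
theorem solve_dir (a : Fin 3) (f : Fin 3 → SP) (hf : ∀ i, A a (f i) = 0) :
    ∃ N : Fin 3 → Fin 3 → SP, (∀ i j, N i j = N j i) ∧ (∑ i, N i i = 0) ∧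
      ∀ i, ∑ j, D j (N i j) = f i := by
  choose u hu using fun i => exists_prim5 a (f i) (hf i)
  let σ : Equiv.Perm (Fin 3) := Equiv.swap 0 a
  obtain ⟨N, h1, h2, h3⟩ := alg (fun i => D (σ i)) (fun i j g => D_comm _ _ g) (fun i => u (σ i))
  refine ⟨fun i j => N (σ.symm i) (σ.symm j), fun i j => h1 _ _, ?_, ?_⟩
  · rw [← h2]
    exact Equiv.sum_comp σ.symm (fun i => N i i)
  · intro i
    have h := h3 (σ.symm i)
    have e : σ 0 = a := by simp [σ]
    simp only [e, Equiv.apply_symm_apply, hu] at h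
    rw [← h, ← Equiv.sum_comp σ]
    simp

theorem integral_D (i : Fin 3) (g : SP) : ∫ x in dom, (D i g).1 x = 0 := by
  have hle : (fun _ => -π : Fin 3 → ℝ) ≤ fun _ => π := fun _ => by
    have := pi_pos; linarith
  have hc : Continuous (D i g).1 := (D i g).2.1.continuous
  have hsum : ∀ x, ∑ j : Fin 3, (if j = i then fderiv ℝ g.1 x else 0) (Pi.single j 1)
      = (D i g).1 x := by
    intro x
    rw [Finset.sum_eq_single i]
    · simp; rfl
    · intro b _ hb; simp [hb]
    · simp
  have h := integral_divergence_of_hasFDerivAt_off_countable' (E := ℝ) (fun _ => -π)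
    (fun _ => π) hle (fun j : Fin 3 => if j = i then g.1 else 0)
    (fun j x => if j = i then fderiv ℝ g.1 x else 0) ∅ Set.countable_empty
    (fun j => by
      by_cases hj : j = i
      · simp only [hj, if_true]; exact g.2.1.continuous.continuousOn
      · simp only [hj, if_false]; exact continuousOn_const)
    (fun x _ j => by
      by_cases hj : j = i
      · simp only [hj, if_true]; exact (SP_diff g x).hasFDerivAt
      · simp only [hj, if_false]; exact hasFDerivAt_const 0 x)
    (by
      simp only [hsum]
      exact hc.continuousOn.integrableOn_compact isCompact_Icc)
  simp only [hsum] at h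
  unfold dom
  rw [h]
  refine Finset.sum_eq_zero fun j _ => ?_
  by_cases hj : j = i
  · subst hj
    have : ∀ x : Fin 2 → ℝ, g.1 (Fin.insertNth j π x) = g.1 (Fin.insertNth j (-π) x) := by
      intro x
      refine Eq.trans (congrArg g.1 ?_) (g.2.2 _ j)
      ext k
      refine Fin.succAboveCases j ?_ (fun k => ?_) k
      · simp; ring
      · simp
    simp [this]
  · simp [hj]

theorem integral_A (i : Fin 3) (f : SP) : ∫ x in dom, (A i f).1 x = ∫ x in dom, f.1 x := by
  obtain ⟨g, -, hg⟩ := exists_prim i (f - A i f) (A_sub_A i f)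
  have h := integral_D i g
  rw [hg] at h
  have hi : ∀ k : SP, IntegrableOn k.1 dom := fun k =>
    k.2.1.continuous.continuousOn.integrableOn_compact isCompact_Icc
  simp only [Submodule.coe_sub, Pi.sub_apply] at h
  rw [integral_sub (hi f) (hi (A i f))] at h
  linarith

theorem A_upd_ne (i j : Fin 3) (f : SP) (hf : ∀ x t, f.1 (Function.update x j t) = f.1 x)
    (x : Fin 3 → ℝ) (t : ℝ) : (A i f).1 (Function.update x j t) = (A i f).1 x := by
  by_cases h : i = j
  · subst h; exact A_upd i f x t
  · simp only [A_apply, Function.update_comm (Ne.symm h), hf]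

theorem AAA_zero (f : SP) (hf : ∫ x in dom, f.1 x = 0) : A 2 (A 1 (A 0 f)) = 0 := by
  set k := A 2 (A 1 (A 0 f)) with hk
  have u2 : ∀ x t, k.1 (Function.update x 2 t) = k.1 x := A_upd 2 _
  have u1 : ∀ x t, k.1 (Function.update x 1 t) = k.1 x := A_upd_ne 2 1 _ (A_upd 1 _)
  have u0 : ∀ x t, k.1 (Function.update x 0 t) = k.1 x :=
    A_upd_ne 2 0 _ (A_upd_ne 1 0 _ (A_upd 0 _))
  have hconst : ∀ x, k.1 x = k.1 0 := by
    intro x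
    rw [← u0 x 0, ← u1 _ 0, ← u2 _ 0]
    refine congrArg k.1 ?_
    ext i
    fin_cases i <;> simp [Function.update]
  have hint : ∫ x in dom, k.1 x = 0 := by
    rw [hk, integral_A, integral_A, integral_A, hf]
  simp only [hconst] at hint
  rw [setIntegral_const] at hint
  have hvol : volume.real dom ≠ 0 := by
    unfold dom
    rw [measureReal_def, Real.volume_Icc_pi_toReal]
    · have := pi_pos
      simp only [Finset.prod_const]
      exact pow_ne_zero _ (by linarith)
    · intro i; have := pi_pos; simp only; linarith
  have h0 : k.1 0 = 0 := by
    rcases smul_eq_zero.1 hint with h | h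
    · exact absurd h hvol
    · exact h
  ext x
  rw [hconst, h0]; rfl

theorem symmetric_inverse_divergence
    (v : (Fin 3 → ℝ) → (Fin 3 → ℝ))
    (hsmooth : ∀ i, ContDiff ℝ (⊤ : ℕ∞) (fun x => v x i))
    (hper : ∀ i, Periodic3 (fun x => v x i))
    (hmean : ∀ i, ∫ x in dom, v x i = 0) :
    ∃ R : (Fin 3 → ℝ) → Matrix (Fin 3) (Fin 3) ℝ,
      (∀ i j, ContDiff ℝ (⊤ : ℕ∞) (fun x => R x i j)) ∧
      (∀ i j, Periodic3 (fun x => R x i j)) ∧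
      (∀ x, (R x).IsSymm) ∧
      (∀ x, Matrix.trace (R x) = 0) ∧
      (∀ x i, ∑ j, pd j (fun y => R y i j) x = v x i) := by
  let f : Fin 3 → SP := fun i => ⟨fun x => v x i, hsmooth i, hper i⟩
  obtain ⟨N0, s0, t0, e0⟩ := solve_dir 0 (fun i => f i - A 0 (f i)) (fun i => A_sub_A 0 _)
  obtain ⟨N1, s1, t1, e1⟩ := solve_dir 1 (fun i => A 0 (f i) - A 1 (A 0 (f i)))
    (fun i => A_sub_A 1 _)
  obtain ⟨N2, s2, t2, e2⟩ := solve_dir 2 (fun i => A 1 (A 0 (f i)) - A 2 (A 1 (A 0 (f i))))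
    (fun i => A_sub_A 2 _)
  let N : Fin 3 → Fin 3 → SP := fun i j => N0 i j + N1 i j + N2 i j
  have hs : ∀ i j, N i j = N j i := fun i j => by
    simp only [N]; rw [s0, s1, s2]
  have ht : ∑ i, N i i = 0 := by
    simp only [N, Finset.sum_add_distrib, t0, t1, t2, add_zero]
  have he : ∀ i, ∑ j, D j (N i j) = f i := fun i => by
    simp only [N, map_add, Finset.sum_add_distrib, e0, e1, e2]
    rw [AAA_zero (f i) (hmean i)]
    abel
  refine ⟨fun x => Matrix.of fun i j => (N i j).1 x, fun i j => (N i j).2.1,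
    fun i j => (N i j).2.2, ?_, ?_, ?_⟩
  · intro x
    ext i j
    simp only [Matrix.transpose_apply, Matrix.of_apply]
    rw [hs]
  · intro x
    have := congrArg (fun g : SP => g.1 x) ht
    simpa [Matrix.trace, Fin.sum_univ_three] using this
  · intro x i
    have := congrArg (fun g : SP => g.1 x) (he i)
    simp only [Fin.sum_univ_three] at this ⊢
    exact this

end
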